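/- arXiv:1708.09351 — 5 statements merged into one kernel-verified Lean document; each statement's English description precedes it below -/
import Mathlib

section
/- Consider a finite directed graph (N,E) whose underlying undirected graph is connected, and for each bus j ∈ N a function f_j : ℝ^{n_j} × ℝ → ℝ^{n_j}. Suppose a point (η*, ω*, x^{s,*}) with η* : E → ℝ, ω* : N → ℝ, x^{s,*}_j ∈ ℝ^{n_j} satisfies the equilibrium conditions: ω*_i − ω*_j = 0 for every edge (i,j) ∈ E, and f_j(x^{s,*}_j, −ω*_j) = 0 for every j ∈ N; and suppose there exists a bus j̄ ∈ N such that for all x̄ ∈ ℝ^{n_{j̄}} and ω̄ ∈ ℝ, f_{j̄}(x̄, −ω̄) = 0 implies ω̄ = 0. Then ω*_j = 0 for every j ∈ N. Moreover, for any load parameters d̲_j ≤ 0 ≤ d̄_j and 𝜔̲_j < 0 < ω̄_j, the Filippov regularization of the on-off load map satisfies F_j(ω*_j) = {0}; in particular the equilibrium controllable demand is zero at every bus. -/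
/-- The on-off controllable load map:
`f^c(ω) = d̄` if `ω > ω̄`, `0` if `𝜔̲ < ω ≤ ω̄`, `d̲` if `ω ≤ 𝜔̲`. -/
noncomputable def onOffLoad (dlo dhi wlo whi ω : ℝ) : ℝ :=
  if whi < ω then dhi else if ω ≤ wlo then dlo else 0

/-- The Filippov regularization of the on-off load map:
`F(ω) = [0, d̄]` if `ω = ω̄`, `F(ω) = [d̲, 0]` if `ω = 𝜔̲`, `F(ω) = {f^c(ω)}` otherwise. -/
noncomputable def filippov (dlo dhi wlo whi ω : ℝ) : Set ℝ :=
  if ω = whi then Set.Icc 0 dhi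
  else if ω = wlo then Set.Icc dlo 0
  else {onOffLoad dlo dhi wlo whi ω}

theorem onOffLoad_eq_zero {wlo whi ω : ℝ} (dlo dhi : ℝ) (hω : ω ∈ Set.Ioc wlo whi) :
    onOffLoad dlo dhi wlo whi ω = 0 := by
  rw [onOffLoad, if_neg hω.2.not_gt, if_neg hω.1.not_ge]

theorem filippov_eq_singleton_zero {wlo whi ω : ℝ} (dlo dhi : ℝ) (hω : ω ∈ Set.Ioo wlo whi) :
    filippov dlo dhi wlo whi ω = {0} := by
  rw [filippov, if_neg hω.2.ne, if_neg hω.1.ne',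
    onOffLoad_eq_zero dlo dhi (Set.Ioo_subset_Ioc_self hω)]

section Connectivity

variable {V β : Type*} {g : V → β}

theorem apply_eq_of_reachable {G : SimpleGraph V} (hg : ∀ v w, G.Adj v w → g v = g w) {v w : V}
    (h : G.Reachable v w) : g v = g w := by
  obtain ⟨p⟩ := h
  induction p with
  | nil => rfl
  | cons hadj _ ih => exact (hg _ _ hadj).trans ih

theorem apply_eq_of_preconnected_fromRel {r : V → V → Prop}
    (hr : (SimpleGraph.fromRel r).Preconnected) (hg : ∀ v w, r v w → g v = g w) (v w : V) :
    g v = g w := by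
  refine apply_eq_of_reachable (fun a b hab ↦ ?_) (hr v w)
  rcases ((SimpleGraph.fromRel_adj r a b).mp hab).2 with hforward | hbackward
  · exact hg a b hforward
  · exact (hg b a hbackward).symm

end Connectivity

theorem stmt_0_general {N : Type*} {r : N → N → Prop}
    (hr : (SimpleGraph.fromRel r).Preconnected) {X Y : N → Type*} [∀ j, Zero (Y j)]
    {f : ∀ j, X j → ℝ → Y j} {ω : N → ℝ} {x : ∀ j, X j}
    (hsync : ∀ i j, r i j → ω i = ω j) (hsteady : ∀ j, f j (x j) (-ω j) = 0)
    (hbus : ∃ k, ∀ (y : X k) (w : ℝ), f k y (-w) = 0 → w = 0) :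
    (∀ j, ω j = 0) ∧
      ∀ j, ∀ dlo dhi wlo whi : ℝ, wlo < 0 → 0 < whi → filippov dlo dhi wlo whi (ω j) = {0} := by
  obtain ⟨k, hk⟩ := hbus
  have hω (j : N) : ω j = 0 :=
    (apply_eq_of_preconnected_fromRel hr hsync j k).trans (hk (x k) (ω k) (hsteady k))
  refine ⟨hω, fun j dlo dhi wlo whi hlo hhi ↦ ?_⟩
  rw [hω j]
  exact filippov_eq_singleton_zero dlo dhi ⟨hlo, hhi⟩

/-- Characterization of equilibria of the power network with on-off loads:
the equilibrium frequency deviation is zero at every bus, and the Filippov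
regularization of the on-off load map is the singleton `{0}` at the equilibrium frequency. -/
theorem stmt_0 {N : Type*} [Fintype N] (E : Set (N × N))
    (hconn : (SimpleGraph.fromRel (fun i j => (i, j) ∈ E)).Connected)
    (n : N → ℕ)
    (f : ∀ j : N, (Fin (n j) → ℝ) → ℝ → (Fin (n j) → ℝ))
    (ηstar : {e : N × N // e ∈ E} → ℝ) (ωstar : N → ℝ)
    (xstar : ∀ j : N, Fin (n j) → ℝ)
    (heq1 : ∀ i j : N, (i, j) ∈ E → ωstar i - ωstar j = 0)
    (heq2 : ∀ j : N, f j (xstar j) (-ωstar j) = 0)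
    (hbar : ∃ jbar : N, ∀ (xb : Fin (n jbar) → ℝ) (wb : ℝ),
      f jbar xb (-wb) = 0 → wb = 0) :
    (∀ j : N, ωstar j = 0) ∧
    ∀ dlo dhi wlo whi : N → ℝ,
      (∀ j, dlo j ≤ 0) → (∀ j, 0 ≤ dhi j) → (∀ j, wlo j < 0) → (∀ j, 0 < whi j) →
      ∀ j : N, filippov (dlo j) (dhi j) (wlo j) (whi j) (ωstar j) = {0} := by
  obtain ⟨hω, hload⟩ := stmt_0_general hconn.preconnected
    (fun i j hij ↦ sub_eq_zero.mp (heq1 i j hij)) heq2 hbar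
  exact ⟨hω, fun _ _ _ _ _ _ hlo hhi j ↦ hload j _ _ _ _ (hlo j) (hhi j)⟩
end

section
/- Let (N,E) be a finite directed graph with E ⊆ N × N, let B_{ij} > 0 for (i,j) ∈ E, and let real parameters p^L_j, s*_j (j ∈ N) and η*_{ij} ((i,j) ∈ E) satisfy the equilibrium power balance −p^L_j + s*_j − Σ_{k:(j,k)∈E} B_{jk} sin η*_{jk} + Σ_{i:(i,j)∈E} B_{ij} sin η*_{ij} = 0 for every j ∈ N. Let ω_j, s_j (j ∈ N), η_{ij} ((i,j) ∈ E), and numbers a_j, φ_j with φ_j ≥ 0 and a_j ≤ −ω_j (s_j − s*_j) − φ_j for each j ∈ N, and for each j let v_j ∈ F_j(ω_j), where F_j is the Filippov regularization of the on-off load map with parameters d̲_j ≤ 0 ≤ d̄_j and 𝜔̲_j < 0 < ω̄_j. Then Σ_{j∈N} ω_j (−p^L_j + s_j − v_j − Σ_{k:(j,k)∈E} B_{jk} sin η_{jk} + Σ_{i:(i,j)∈E} B_{ij} sin η_{ij}) + Σ_{(i,j)∈E} B_{ij} (sin η_{ij} − sin η*_{ij})(ω_i − ω_j) + Σ_{j∈N}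 a_j ≤ −Σ_{j∈N} φ_j ≤ 0. -/
/-!
Against the edge flows, nodal frequencies satisfy a discrete integration by parts: the power that
the net outflows of a flow `p` exchange with the nodes is `∑ e, p e * (ω (src e) - ω (tgt e))`.
After the equilibrium balance is subtracted at every node, the network terms therefore cancel
exactly against the derivative of the potential energy, and what remains is a sum of one term
`ω j * (s j - sstar j) - ω j * v j + a j` per node. Input strict passivity of the generation bounds
it by `-φ j - ω j * v j`, and every selection of the Filippov regularization lies in the sector
`0 ≤ ω j * v j`.
-/

section OnOffLoad

variable {dlo dhi wlo whi ω v : ℝ}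

lemma mul_onOffLoad_nonneg (hdlo : dlo ≤ 0) (hdhi : 0 ≤ dhi) (hwlo : wlo ≤ 0) (hwhi : 0 ≤ whi) :
    0 ≤ ω * onOffLoad dlo dhi wlo whi ω := by
  unfold onOffLoad
  split_ifs with h_above h_below
  · exact mul_nonneg (hwhi.trans h_above.le) hdhi
  · exact mul_nonneg_of_nonpos_of_nonpos (h_below.trans hwlo) hdlo
  · exact (mul_zero ω).ge

lemma mul_nonneg_of_mem_filippov (hdlo : dlo ≤ 0) (hdhi : 0 ≤ dhi) (hwlo : wlo ≤ 0)
    (hwhi : 0 ≤ whi) (hv : v ∈ filippov dlo dhi wlo whi ω) : 0 ≤ ω * v := by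
  unfold filippov at hv
  split_ifs at hv with h_hi h_lo
  · exact mul_nonneg (h_hi ▸ hwhi) hv.1
  · exact mul_nonneg_of_nonpos_of_nonpos (h_lo ▸ hwlo) hv.2
  · rw [Set.mem_singleton_iff.mp hv]
    exact mul_onOffLoad_nonneg hdlo hdhi hwlo hwhi

end OnOffLoad

section Network

variable {ι N R : Type*} [DecidableEq N]

/-- The divergence at node `j` of the edge flow `p`: the flow leaving `j` minus the flow entering
it. The edges are the elements of `E`, directed from `src e` to `tgt e`; loops and parallel edges
are allowed. -/
def netOutflow [AddCommGroup R] (E : Finset ι) (src tgt : ι → N) (p : ι → R) (j : N) : R :=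
  ∑ e ∈ E with src e = j, p e - ∑ e ∈ E with tgt e = j, p e

lemma netOutflow_sub [AddCommGroup R] (E : Finset ι) (src tgt : ι → N) (p q : ι → R) (j : N) :
    netOutflow E src tgt (p - q) j = netOutflow E src tgt p j - netOutflow E src tgt q j := by
  simp only [netOutflow, Pi.sub_apply, Finset.sum_sub_distrib]
  abel

variable [Fintype N]

lemma sum_mul_sum_fiber [NonUnitalNonAssocSemiring R] (E : Finset ι) (g : ι → N) (ω : N → R)
    (p : ι → R) : ∑ j, ω j * ∑ e ∈ E with g e = j, p e = ∑ e ∈ E, ω (g e) * p e := by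
  simp only [Finset.sum_filter, Finset.mul_sum, mul_ite, mul_zero]
  rw [Finset.sum_comm]
  simp only [Finset.sum_ite_eq, Finset.mem_univ, if_true]

variable [CommRing R] (E : Finset ι) (src tgt : ι → N)

lemma sum_mul_netOutflow (ω : N → R) (p : ι → R) :
    ∑ j, ω j * netOutflow E src tgt p j = ∑ e ∈ E, p e * (ω (src e) - ω (tgt e)) := by
  simp only [netOutflow, mul_sub, sub_mul, Finset.sum_sub_distrib, sum_mul_sum_fiber,
    mul_comm (p _)]

lemma sum_mul_imbalance_add_sum_flow_sub_mul {p pstar : ι → R} {pL sstar ω s v : N → R}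
    (hbal : ∀ j, -pL j + sstar j - netOutflow E src tgt pstar j = 0) :
    ∑ j, ω j * (-pL j + s j - v j - netOutflow E src tgt p j)
      + ∑ e ∈ E, (p e - pstar e) * (ω (src e) - ω (tgt e))
      = ∑ j, (ω j * (s j - sstar j) - ω j * v j) := by
  have by_parts := sum_mul_netOutflow E src tgt ω (p - pstar)
  simp only [Pi.sub_apply] at by_parts
  rw [← by_parts, ← Finset.sum_add_distrib]
  refine Finset.sum_congr rfl fun j _ => ?_
  rw [netOutflow_sub]
  linear_combination ω j * hbal j

theorem stmt_3_general [PartialOrder R] [IsOrderedAddMonoid R]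
    {p pstar : ι → R} {pL sstar ω s a φ v : N → R}
    (hbal : ∀ j, -pL j + sstar j - netOutflow E src tgt pstar j = 0)
    (hφ : ∀ j, 0 ≤ φ j)
    (ha : ∀ j, a j ≤ -ω j * (s j - sstar j) - φ j)
    (hv : ∀ j, 0 ≤ ω j * v j) :
    ∑ j, ω j * (-pL j + s j - v j - netOutflow E src tgt p j)
      + ∑ e ∈ E, (p e - pstar e) * (ω (src e) - ω (tgt e))
      + ∑ j, a j ≤ -∑ j, φ j ∧ -∑ j, φ j ≤ 0 := by
  refine ⟨?_, neg_nonpos.mpr (Finset.sum_nonneg fun j _ => hφ j)⟩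
  rw [sum_mul_imbalance_add_sum_flow_sub_mul E src tgt hbal, ← Finset.sum_add_distrib,
    ← Finset.sum_neg_distrib]
  refine Finset.sum_le_sum fun j _ => ?_
  calc ω j * (s j - sstar j) - ω j * v j + a j
      ≤ ω j * (s j - sstar j) - 0 + (-ω j * (s j - sstar j) - φ j) :=
        add_le_add (sub_le_sub_left (hv j) _) (ha j)
    _ = -φ j := by ring

end Network

/-- The key dissipation inequality `max V̇ ≤ −Σ_j φ_j(−ω_j) ≤ 0` in the proof of
Theorem 1 of the paper, for the power network with on-off loads. -/
theorem stmt_3 {N : Type*} [Fintype N] [DecidableEq N] (E : Finset (N × N))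
    (B ηstar η : N × N → ℝ) (pL sstar ω s a φ v : N → ℝ)
    (dlo dhi wlo whi : N → ℝ)
    (hB : ∀ e ∈ E, 0 < B e)
    (hbal : ∀ j : N, -pL j + sstar j
      - (∑ e ∈ E.filter (fun e => e.1 = j), B e * Real.sin (ηstar e))
      + (∑ e ∈ E.filter (fun e => e.2 = j), B e * Real.sin (ηstar e)) = 0)
    (hφ : ∀ j : N, 0 ≤ φ j)
    (ha : ∀ j : N, a j ≤ -ω j * (s j - sstar j) - φ j)
    (hdlo : ∀ j, dlo j ≤ 0) (hdhi : ∀ j, 0 ≤ dhi j)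
    (hwlo : ∀ j, wlo j < 0) (hwhi : ∀ j, 0 < whi j)
    (hv : ∀ j : N, v j ∈ filippov (dlo j) (dhi j) (wlo j) (whi j) (ω j)) :
    (∑ j : N, ω j * (-pL j + s j - v j
      - (∑ e ∈ E.filter (fun e => e.1 = j), B e * Real.sin (η e))
      + (∑ e ∈ E.filter (fun e => e.2 = j), B e * Real.sin (η e))))
    + (∑ e ∈ E, B e * (Real.sin (η e) - Real.sin (ηstar e)) * (ω e.1 - ω e.2))
    + (∑ j : N, a j) ≤ -∑ j : N, φ j ∧ -∑ j : N, φ j ≤ 0 := by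
  simpa only [netOutflow, sub_add, mul_sub] using
    stmt_3_general E Prod.fst Prod.snd (p := fun e => B e * Real.sin (η e))
      (by simpa only [netOutflow, sub_add] using hbal) hφ ha
      fun j => mul_nonneg_of_mem_filippov (hdlo j) (hdhi j) (hwlo j).le (hwhi j).le (hv j)
end

section
/- Let (N,E) be a finite directed graph with E ⊆ N × N, let B_{ij} > 0 for (i,j) ∈ E, and let real parameters p^L_j, s*_j (j ∈ N) and η*_{ij} ((i,j) ∈ E) satisfy the equilibrium power balance −p^L_j + s*_j − Σ_{k:(j,k)∈E} B_{jk} sin η*_{jk} + Σ_{i:(i,j)∈E} B_{ij} sin η*_{ij} = 0 for every j ∈ N. For each bus j let 0 < ω⁰_j < ω¹_j, d̄_j ≥ 0, and let ω_j, s_j (j ∈ N), η_{ij} ((i,j) ∈ E), numbers a_j, φ_j with φ_j ≥ 0 and a_j ≤ −ω_j (s_j − s*_j) − φ_j, and σ_j ∈ I_j(ω_j). Then Σ_{j∈N} ω_j (−p^L_j + s_j − d̄_j σ_j − Σ_{k:(j,k)∈E} B_{jk} sin η_{jk} + Σ_{i:(i,j)∈E} B_{ij} sin η_{ij}) + Σ_{(i,j)∈E}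 B_{ij} (sin η_{ij} − sin η*_{ij})(ω_i − ω_j) + Σ_{j∈N} a_j ≤ −Σ_{j∈N} φ_j ≤ 0. -/
/-- `sgn(ω) = 1` for `ω ≥ 0` and `sgn(ω) = −1` for `ω < 0`. -/
noncomputable def hsgn (ω : ℝ) : ℝ := if 0 ≤ ω then 1 else -1

/-- The hysteresis consistency map with thresholds `0 < ω⁰ < ω¹`:
`I(ω) = {sgn ω}` if `|ω| > ω¹`, `I(ω) = {0}` if `|ω| < ω⁰`,
and `I(ω) = {0, sgn ω}` if `ω⁰ ≤ |ω| ≤ ω¹`. -/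
noncomputable def hystI (w0 w1 ω : ℝ) : Set ℝ :=
  if w1 < |ω| then {hsgn ω}
  else if |ω| < w0 then {0}
  else {0, hsgn ω}

/-!
Weighting the net outflow at each bus by the frequency `ω` and summing by parts turns the network
term into `∑ e, F e * (ω (src e) - ω (tgt e))`, so the network power and the storage term on the
edges cancel once the equilibrium balance is subtracted. What remains is, at each bus, the supply
rate `ω * (s - s*)`, which passivity of the generation compensates, and `-ω * d`, which is
nonpositive because a hysteretic load is either off or has the sign of `ω`.
-/

section Divergence

variable {ι N R : Type*} [DecidableEq N]

/-- The discrete divergence at the vertex `v` of an edge flow `F` on a directed multigraph, i.e.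
outflow minus inflow. The edges are the members of `E`, with endpoints given by `src` and `tgt`;
loops and parallel edges are allowed. -/
def flowDivergence [AddCommGroup R] (E : Finset ι) (src tgt : ι → N) (F : ι → R) (v : N) : R :=
  (∑ e ∈ E with src e = v, F e) - ∑ e ∈ E with tgt e = v, F e

lemma flowDivergence_sub [AddCommGroup R] (E : Finset ι) (src tgt : ι → N) (F G : ι → R) (v : N) :
    flowDivergence E src tgt (fun e => F e - G e) v =
      flowDivergence E src tgt F v - flowDivergence E src tgt G v := by
  simp only [flowDivergence, Finset.sum_sub_distrib]
  abel

lemma sum_mul_sum_fiberwise [Fintype N] [NonUnitalNonAssocSemiring R]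
    (E : Finset ι) (g : ι → N) (ω : N → R) (F : ι → R) :
    ∑ v, ω v * ∑ e ∈ E with g e = v, F e = ∑ e ∈ E, ω (g e) * F e := by
  rw [← Finset.sum_fiberwise E g]
  refine Finset.sum_congr rfl fun v _ => ?_
  rw [Finset.mul_sum]
  refine Finset.sum_congr rfl fun e he => ?_
  rw [(Finset.mem_filter.mp he).2]

lemma sum_mul_flowDivergence [Fintype N] [NonUnitalNonAssocRing R]
    (E : Finset ι) (src tgt : ι → N) (ω : N → R) (F : ι → R) :
    ∑ v, ω v * flowDivergence E src tgt F v = ∑ e ∈ E, (ω (src e) - ω (tgt e)) * F e := by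
  simp only [flowDivergence, mul_sub, sub_mul, Finset.sum_sub_distrib, sum_mul_sum_fiberwise]

end Divergence

section Hysteresis

lemma mul_hsgn (ω : ℝ) : ω * hsgn ω = |ω| := by
  unfold hsgn
  split_ifs with h
  · rw [mul_one, abs_of_nonneg h]
  · rw [mul_neg_one, abs_of_neg (not_le.mp h)]

lemma hystI_subset (w0 w1 ω : ℝ) : hystI w0 w1 ω ⊆ {0, hsgn ω} := by
  unfold hystI
  split_ifs <;> simp

lemma mul_nonneg_of_mem_hystI {w0 w1 ω σ : ℝ} (hσ : σ ∈ hystI w0 w1 ω) : 0 ≤ ω * σ := by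
  rcases hystI_subset w0 w1 ω hσ with rfl | rfl
  · rw [mul_zero]
  · rw [mul_hsgn]
    exact abs_nonneg ω

end Hysteresis

section Dissipation

variable {ι N R : Type*} [Fintype N] [DecidableEq N] [CommRing R]

lemma sum_mul_netPower_add_sum_edges (E : Finset ι) (src tgt : ι → N) {F Fstar : ι → R}
    {pL s sstar ω d : N → R}
    (hbal : ∀ j, -pL j + sstar j - flowDivergence E src tgt Fstar j = 0) :
    ∑ j, ω j * (-pL j + s j - d j - flowDivergence E src tgt F j)
      + ∑ e ∈ E, (F e - Fstar e) * (ω (src e) - ω (tgt e)) =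
    ∑ j, (ω j * (s j - sstar j) - ω j * d j) := by
  have edge_power : ∑ e ∈ E, (F e - Fstar e) * (ω (src e) - ω (tgt e)) =
      ∑ j, ω j * (flowDivergence E src tgt F j - flowDivergence E src tgt Fstar j) := by
    simp only [← flowDivergence_sub, sum_mul_flowDivergence, mul_comm]
  rw [edge_power, ← Finset.sum_add_distrib]
  refine Finset.sum_congr rfl fun j _ => ?_
  linear_combination ω j * hbal j

theorem stmt_4_general [PartialOrder R] [IsOrderedAddMonoid R]
    (E : Finset ι) (src tgt : ι → N) {F Fstar : ι → R} {pL s sstar ω d a φ : N → R}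
    (hbal : ∀ j, -pL j + sstar j - flowDivergence E src tgt Fstar j = 0)
    (hφ : ∀ j, 0 ≤ φ j)
    (ha : ∀ j, a j ≤ -ω j * (s j - sstar j) - φ j)
    (hd : ∀ j, 0 ≤ ω j * d j) :
    (∑ j, ω j * (-pL j + s j - d j - flowDivergence E src tgt F j))
      + (∑ e ∈ E, (F e - Fstar e) * (ω (src e) - ω (tgt e)))
      + (∑ j, a j) ≤ -∑ j, φ j ∧ -∑ j, φ j ≤ 0 := by
  refine ⟨?_, neg_nonpos.mpr (Finset.sum_nonneg fun j _ => hφ j)⟩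
  rw [sum_mul_netPower_add_sum_edges E src tgt hbal, ← Finset.sum_add_distrib,
    ← Finset.sum_neg_distrib]
  refine Finset.sum_le_sum fun j _ => ?_
  calc ω j * (s j - sstar j) - ω j * d j + a j
      ≤ ω j * (s j - sstar j) + (-ω j * (s j - sstar j) - φ j) :=
        add_le_add (sub_le_self _ (hd j)) (ha j)
    _ = -φ j := by ring

end Dissipation

/-- The key flow dissipation inequality `V̇ ≤ −Σ_j φ_j(−ω_j) ≤ 0` on the flow set in the
proof of Theorem 2 of the paper, for the power network with hysteretic on-off loads
`d^c_j = d̄_j σ_j`. -/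
theorem stmt_4 {N : Type*} [Fintype N] [DecidableEq N] (E : Finset (N × N))
    (B ηstar η : N × N → ℝ) (pL sstar ω s a φ σ : N → ℝ)
    (w0 w1 dhi : N → ℝ)
    (hB : ∀ e ∈ E, 0 < B e)
    (hbal : ∀ j : N, -pL j + sstar j
      - (∑ e ∈ E.filter (fun e => e.1 = j), B e * Real.sin (ηstar e))
      + (∑ e ∈ E.filter (fun e => e.2 = j), B e * Real.sin (ηstar e)) = 0)
    (hw0 : ∀ j, 0 < w0 j) (hw01 : ∀ j, w0 j < w1 j) (hdhi : ∀ j, 0 ≤ dhi j)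
    (hφ : ∀ j : N, 0 ≤ φ j)
    (ha : ∀ j : N, a j ≤ -ω j * (s j - sstar j) - φ j)
    (hσ : ∀ j : N, σ j ∈ hystI (w0 j) (w1 j) (ω j)) :
    (∑ j : N, ω j * (-pL j + s j - dhi j * σ j
      - (∑ e ∈ E.filter (fun e => e.1 = j), B e * Real.sin (η e))
      + (∑ e ∈ E.filter (fun e => e.2 = j), B e * Real.sin (η e))))
    + (∑ e ∈ E, B e * (Real.sin (η e) - Real.sin (ηstar e)) * (ω e.1 - ω e.2))
    + (∑ j : N, a j) ≤ -∑ j : N, φ j ∧ -∑ j : N, φ j ≤ 0 := by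
  have load_power_nonneg (j : N) : 0 ≤ ω j * (dhi j * σ j) := by
    rw [mul_left_comm]
    exact mul_nonneg (hdhi j) (mul_nonneg_of_mem_hystI (hσ j))
  simp only [sub_add, mul_sub (B _)] at hbal ⊢
  exact stmt_4_general E Prod.fst Prod.snd hbal hφ ha load_power_nonneg
end

section
/- Let K, K̃, τ, D be positive reals with Kτ < D + K̃. Then for every real ω ≠ 0, the real part of the transfer function value S(iω) = (K̃ + K/(iω)) / (1 + iωτ) + D satisfies Re S(iω) = D + (K̃ − Kτ)/(1 + τ²ω²), and consequently Re S(iω) ≥ min(D, D + K̃ − Kτ) > 0. -/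
/-!
Partial fractions give `S(s) = K / s + (K̃ - Kτ) / (1 + τs) + D`. On the imaginary axis the
integrator `K / s` is purely imaginary and the lag `1 / (1 + τs)` has real part
`1 / (1 + τ²ω²) ∈ (0, 1]`, so `Re S(iω)` is a convex combination of `D` (the limit `ω → ∞`) and
`D + K̃ - Kτ` (the limit `ω → 0`).
-/

open Complex

/-- The transfer function `S(s)` from `-ω_j` to the net power supply `s_j`: a PI controller with
gains `K`, `Kt` behind a first-order lag with time constant `τ`, plus frequency damping `D`.
The parameters lie in the same field as `s`, so real ones are coerced to `ℂ`. -/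
def powerSupplyTransfer {𝕜 : Type*} [Field 𝕜] (K Kt τ D s : 𝕜) : 𝕜 :=
  (Kt + K / s) / (1 + s * τ) + D

theorem powerSupplyTransfer_eq_partial_fractions {𝕜 : Type*} [Field 𝕜] (K Kt τ D : 𝕜) {s : 𝕜}
    (hs : s ≠ 0) (hlag : 1 + s * τ ≠ 0) :
    powerSupplyTransfer K Kt τ D s = K / s + (Kt - K * τ) * (1 + s * τ)⁻¹ + D := by
  unfold powerSupplyTransfer
  field_simp
  ring

theorem one_add_I_mul_ofReal_ne_zero (x : ℝ) : 1 + I * (x : ℂ) ≠ 0 := fun h ↦ by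
  simpa using congrArg re h

theorem re_inv_one_add_I_mul_ofReal (x : ℝ) : (1 + I * (x : ℂ))⁻¹.re = (1 + x ^ 2)⁻¹ := by
  simp [inv_re, normSq_apply, sq]

theorem re_ofReal_div_I_mul_ofReal (a x : ℝ) : ((a : ℂ) / (I * x)).re = 0 := by
  simp [div_re]

theorem re_powerSupplyTransfer_I_mul (K Kt τ D : ℝ) {ω : ℝ} (hω : ω ≠ 0) :
    (powerSupplyTransfer (K : ℂ) Kt τ D (I * ω)).re =
      D + (Kt - K * τ) / (1 + τ ^ 2 * ω ^ 2) := by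
  have hs : I * (ω : ℂ) ≠ 0 := mul_ne_zero I_ne_zero (ofReal_ne_zero.mpr hω)
  have hlag : 1 + I * (ω : ℂ) * τ = 1 + I * (ω * τ : ℝ) := by push_cast; ring
  have hgain : (Kt - K * τ : ℂ) = (Kt - K * τ : ℝ) := by push_cast; rfl
  rw [powerSupplyTransfer_eq_partial_fractions _ _ _ _ hs
      (hlag ▸ one_add_I_mul_ofReal_ne_zero (ω * τ)),
    hlag, hgain, add_re, add_re, re_ofReal_div_I_mul_ofReal, re_ofReal_mul,
    re_inv_one_add_I_mul_ofReal, ofReal_re]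
  ring

theorem min_le_add_div_one_add {𝕜 : Type*} [Field 𝕜] [LinearOrder 𝕜] [IsStrictOrderedRing 𝕜]
    (a b : 𝕜) {r : 𝕜} (hr : 0 ≤ r) : min a (a + b) ≤ a + b / (1 + r) :=
  calc min a (a + b)
      ≤ (r / (1 + r)) • a + (1 / (1 + r)) • (a + b) :=
        Convex.min_le_combo _ _ (by positivity) (by positivity) (by field_simp; ring)
    _ = a + b / (1 + r) := by
        simp only [smul_eq_mul]
        field_simp
        ring

theorem stmt_12_general (K Kt τ : ℝ) {D : ℝ} (hD : 0 < D) (hcond : K * τ < D + Kt)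
    {ω : ℝ} (hω : ω ≠ 0) :
    (powerSupplyTransfer (K : ℂ) Kt τ D (I * ω)).re =
        D + (Kt - K * τ) / (1 + τ ^ 2 * ω ^ 2) ∧
      min D (D + Kt - K * τ) ≤ (powerSupplyTransfer (K : ℂ) Kt τ D (I * ω)).re ∧
      0 < min D (D + Kt - K * τ) := by
  have hre := re_powerSupplyTransfer_I_mul K Kt τ D hω
  refine ⟨hre, ?_, lt_min hD (sub_pos.mpr hcond)⟩
  rw [hre, add_sub_assoc]
  exact min_le_add_div_one_add D (Kt - K * τ) (by positivity)

/-- Positive-realness on the imaginary axis of the transfer function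
`S(s) = (K̃ + K/s)/(1 + τs) + D` of the power supply dynamics (14) of the paper,
under the gain condition `Kτ < D + K̃`: for every real `ω ≠ 0`,
`Re S(iω) = D + (K̃ − Kτ)/(1 + τ²ω²) ≥ min(D, D + K̃ − Kτ) > 0`. -/
theorem stmt_12 (K Kt τ D : ℝ) (hK : 0 < K) (hKt : 0 < Kt) (hτ : 0 < τ) (hD : 0 < D)
    (hcond : K * τ < D + Kt) (ω : ℝ) (hω : ω ≠ 0) :
    ∀ S : ℂ,
      S = ((Kt : ℂ) + (K : ℂ) / (Complex.I * (ω : ℂ))) / (1 + Complex.I * (ω : ℂ) * (τ : ℂ))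
          + (D : ℂ) →
      S.re = D + (Kt - K * τ) / (1 + τ ^ 2 * ω ^ 2) ∧
      min D (D + Kt - K * τ) ≤ S.re ∧
      0 < min D (D + Kt - K * τ) := by
  rintro S rfl
  exact stmt_12_general K Kt τ hD hcond hω
end

section
/- Let K, τ_β, τ_γ, D be positive reals with K(τ_β + τ_γ) < D. Then for every real ω ≠ 0, the real part of S(iω) = K / (iω (1 + iωτ_β)(1 + iωτ_γ)) + D satisfies Re S(iω) = D − K(τ_β + τ_γ) / ((1 − ω²τ_βτ_γ)² + ω²(τ_β + τ_γ)²), and since (1 − ω²τ_βτ_γ)² + ω²(τ_β + τ_γ)² = 1 + ω²(τ_β² + τ_γ²) + ω⁴τ_β²τ_γ² ≥ 1, it holds that Re S(iω) ≥ D − K(τ_β + τ_γ) > 0. -/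
/-!
Write `q = (1 + iωτ_β)(1 + iωτ_γ)`. Since `1 / (iωq) = -i q̄ / (ω|q|²)`, the real part of the
integrator-and-lags term is `-K Im q / (ω|q|²)`, and `Im q = ω(τ_β + τ_γ)` cancels the pole at
`ω = 0`. A lag factor has modulus at least `1` on the imaginary axis, so `|q|² ≥ 1` and this term
never falls below its low-frequency limit `-K(τ_β + τ_γ)`.
-/

section

open Complex

/-- The transfer function `S(s)` from `-ω_j` to the net power supply `s_j` of the second-order
turbine-governor dynamics with gain `K`, time constants `τβ`, `τγ` and frequency damping `D`.
At the poles the first summand takes the junk value `0`. -/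
noncomputable def supplyTransfer (K τβ τγ D : ℝ) (s : ℂ) : ℂ :=
  K / (s * (1 + s * τβ) * (1 + s * τγ)) + D

lemma re_ofReal_div_I_mul_ofReal_mul (x y : ℝ) (z : ℂ) :
    ((x : ℂ) / (I * y * z)).re = -(x * z.im / (y * normSq z)) := by
  have re_den : (I * y * z).re = -(y * z.im) := by simp
  have normSq_den : normSq (I * y * z) = y * (y * normSq z) := by
    simp only [map_mul, normSq_I, normSq_ofReal, one_mul, mul_assoc]
  rw [div_re, re_den, normSq_den, ofReal_re, ofReal_im, zero_mul, zero_div, add_zero]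
  rcases eq_or_ne y 0 with rfl | hy
  · simp
  · rw [mul_neg, neg_div, mul_left_comm, mul_div_mul_left _ _ hy]

lemma lag_mul_lag_eq (τβ τγ ω : ℝ) :
    (1 + I * ω * τβ) * (1 + I * ω * τγ) = ⟨1 - ω ^ 2 * τβ * τγ, ω * (τβ + τγ)⟩ := by
  apply Complex.ext <;>
  · simp only [mul_re, mul_im, add_re, add_im, one_re, one_im, I_re, I_im, ofReal_re, ofReal_im]
    ring

lemma normSq_lag_mul_lag (τβ τγ ω : ℝ) :
    normSq ((1 + I * ω * τβ) * (1 + I * ω * τγ))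
      = (1 - ω ^ 2 * τβ * τγ) ^ 2 + ω ^ 2 * (τβ + τγ) ^ 2 := by
  rw [lag_mul_lag_eq, normSq_mk]
  ring

lemma normSq_lag (τ ω : ℝ) : normSq (1 + I * ω * τ) = 1 + (ω * τ) ^ 2 := by
  simp [normSq_apply, sq]

lemma one_le_normSq_lag_mul_lag (τβ τγ ω : ℝ) :
    1 ≤ normSq ((1 + I * ω * τβ) * (1 + I * ω * τγ)) := by
  have one_le_lag (τ : ℝ) : 1 ≤ normSq (1 + I * ω * τ) := by
    rw [normSq_lag]
    exact le_add_of_nonneg_right (sq_nonneg _)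
  rw [map_mul]
  exact one_le_mul_of_one_le_of_one_le (one_le_lag τβ) (one_le_lag τγ)

lemma re_supplyTransfer_I_mul (K τβ τγ D : ℝ) {ω : ℝ} (hω : ω ≠ 0) :
    (supplyTransfer K τβ τγ D (I * ω)).re
      = D - K * (τβ + τγ) / normSq ((1 + I * ω * τβ) * (1 + I * ω * τγ)) := by
  have im_lags : ((1 + I * ω * τβ) * (1 + I * ω * τγ)).im = ω * (τβ + τγ) := by
    rw [lag_mul_lag_eq]
  rw [supplyTransfer, add_re, ofReal_re, mul_assoc (I * (ω : ℂ)),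
    re_ofReal_div_I_mul_ofReal_mul, im_lags, mul_left_comm, mul_div_mul_left _ _ hω,
    neg_add_eq_sub]

lemma le_re_supplyTransfer_I_mul {K τβ τγ : ℝ} (D : ℝ) (hKτ : 0 ≤ K * (τβ + τγ)) {ω : ℝ}
    (hω : ω ≠ 0) : D - K * (τβ + τγ) ≤ (supplyTransfer K τβ τγ D (I * ω)).re := by
  rw [re_supplyTransfer_I_mul K τβ τγ D hω]
  exact sub_le_sub_left (div_le_self hKτ (one_le_normSq_lag_mul_lag τβ τγ ω)) D

end

/-- Positive-realness on the imaginary axis of the transfer function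
`S(s) = (K/s)·1/((1 + τ_β s)(1 + τ_γ s)) + D` of the second-order power supply
dynamics (15) of the paper, under the gain condition `K(τ_β + τ_γ) < D`: for every
real `ω ≠ 0`,
`Re S(iω) = D − K(τ_β + τ_γ)/((1 − ω²τ_βτ_γ)² + ω²(τ_β + τ_γ)²) ≥ D − K(τ_β + τ_γ) > 0`,
using `(1 − ω²τ_βτ_γ)² + ω²(τ_β + τ_γ)² = 1 + ω²(τ_β² + τ_γ²) + ω⁴τ_β²τ_γ² ≥ 1`. -/
theorem stmt_13 (K τβ τγ D : ℝ) (hK : 0 < K) (hτβ : 0 < τβ) (hτγ : 0 < τγ) (hD : 0 < D)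
    (hcond : K * (τβ + τγ) < D) (ω : ℝ) (hω : ω ≠ 0) :
    ∀ S : ℂ,
      S = (K : ℂ) / (Complex.I * (ω : ℂ) * (1 + Complex.I * (ω : ℂ) * (τβ : ℂ))
            * (1 + Complex.I * (ω : ℂ) * (τγ : ℂ))) + (D : ℂ) →
      S.re = D - K * (τβ + τγ) / ((1 - ω ^ 2 * τβ * τγ) ^ 2 + ω ^ 2 * (τβ + τγ) ^ 2) ∧
      (1 - ω ^ 2 * τβ * τγ) ^ 2 + ω ^ 2 * (τβ + τγ) ^ 2
        = 1 + ω ^ 2 * (τβ ^ 2 + τγ ^ 2) + ω ^ 4 * τβ ^ 2 * τγ ^ 2 ∧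
      1 ≤ (1 - ω ^ 2 * τβ * τγ) ^ 2 + ω ^ 2 * (τβ + τγ) ^ 2 ∧
      D - K * (τβ + τγ) ≤ S.re ∧
      0 < D - K * (τβ + τγ) := by
  rintro S rfl
  have normSq_eq := normSq_lag_mul_lag τβ τγ ω
  refine ⟨?re_eq, ?expansion, ?one_le, ?lower_bound, sub_pos.mpr hcond⟩
  case re_eq => exact normSq_eq ▸ re_supplyTransfer_I_mul K τβ τγ D hω
  case expansion => ring
  case one_le => exact normSq_eq ▸ one_le_normSq_lag_mul_lag τβ τγ ω
  case lower_bound => exact le_re_supplyTransfer_I_mul D (by positivity) hω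
end
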